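/- In every C_k-algebra (A, t), for all a, b, c ∈ A one has a ⇁ (b ⇁ c) = (a ⇁ b) ⇁ (a ⇁ c). -/

import Mathlib

universe u

/-- Modal pseudocomplemented De Morgan algebra (mpM-algebra). -/
class MpM (A : Type u) extends DistribLattice A, BoundedOrder A where
  dm : A → A   -- De Morgan negation ∼
  ps : A → A   -- pseudocomplement *
  dm_dm : ∀ x : A, dm (dm x) = x
  dm_sup : ∀ x y : A, dm (x ⊔ y) = dm x ⊓ dm y
  pseudo : ∀ a x : A, a ⊓ x = ⊥ ↔ x ≤ ps a
  modal : ∀ x : A, x ⊔ dm x ≤ x ⊔ ps x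

open MpM

variable {A : Type u} [MpM A]

/-- ∇x = ∼(∼x ∧ x*) -/
def nabla (x : A) : A := dm (dm x ⊓ ps x)

/-- △x = ∼∇∼x -/
def tri (x : A) : A := dm (nabla (dm x))

/-- A C_k-algebra structure on an mpM-algebra `A`: an automorphism `t` with `t^k = id`. -/
structure CkStr (A : Type u) [MpM A] (k : ℕ) where
  t : A → A
  bij : Function.Bijective t
  map_inf : ∀ x y : A, t (x ⊓ y) = t x ⊓ t y
  map_sup : ∀ x y : A, t (x ⊔ y) = t x ⊔ t y
  map_dm : ∀ x : A, t (dm x) = dm (t x)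
  map_ps : ∀ x : A, t (ps x) = ps (t x)
  map_bot : t (⊥ : A) = ⊥
  map_top : t (⊤ : A) = ⊤
  periodic : ∀ x : A, t^[k] x = x

/-- Lattice filter: nonempty, upward closed, closed under binary meets. -/
def IsLatFilter (F : Set A) : Prop :=
  F.Nonempty ∧ (∀ x ∈ F, ∀ y : A, x ≤ y → y ∈ F) ∧ ∀ x ∈ F, ∀ y ∈ F, x ⊓ y ∈ F

/-- c-filter: a filter closed under △ and t. -/
def IsCFilter {k : ℕ} (T : CkStr A k) (F : Set A) : Prop :=
  IsLatFilter F ∧ ∀ x ∈ F, tri x ∈ F ∧ T.t x ∈ F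

/-- maximal c-filter: proper and not properly contained in a proper c-filter. -/
def IsMaxCFilter {k : ℕ} (T : CkStr A k) (N : Set A) : Prop :=
  IsCFilter T N ∧ N ≠ Set.univ ∧
    ∀ G : Set A, IsCFilter T G → G ≠ Set.univ → N ⊆ G → N = G

/-- prime filter -/
def IsPrimeFilter (P : Set A) : Prop :=
  IsLatFilter P ∧ P ≠ Set.univ ∧ ∀ x y : A, x ⊔ y ∈ P → x ∈ P ∨ y ∈ P

/-- ultrafilter: maximal proper (lattice) filter -/
def IsUltraFilter (U : Set A) : Prop :=
  IsLatFilter U ∧ U ≠ Set.univ ∧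
    ∀ G : Set A, IsLatFilter G → G ≠ Set.univ → U ⊆ G → U = G

/-- Birula–Rasiowa transformation φ(P) = A \ {∼x : x ∈ P}. -/
def brPhi (P : Set A) : Set A := Set.univ \ (dm '' P)

/-- a ⇁ b = (⋁_{i=1}^{k} ∇(∼ t^i(a))) ∨ b -/
def rimp {k : ℕ} (T : CkStr A k) (a b : A) : A :=
  ((Finset.Icc 1 k).sup fun i => nabla (dm (T.t^[i] a))) ⊔ b

/-- cyclic deductive system -/
def IsCDS {k : ℕ} (T : CkStr A k) (D : Set A) : Prop :=
  (⊤ : A) ∈ D ∧ ∀ x ∈ D, ∀ y : A, rimp T x y ∈ D → y ∈ D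

/-- maximal cyclic deductive system -/
def IsMaxCDS {k : ℕ} (T : CkStr A k) (M : Set A) : Prop :=
  IsCDS T M ∧ M ≠ Set.univ ∧
    ∀ G : Set A, IsCDS T G → G ≠ Set.univ → M ⊆ G → M = G

/-- the smallest cyclic deductive system containing `X` -/
def genCDS {k : ℕ} (T : CkStr A k) (X : Set A) : Set A :=
  ⋂₀ {D : Set A | IsCDS T D ∧ X ⊆ D}

/-- K(A) = {x : t(x) = x and ∇x = x} -/
def Kset {k : ℕ} (T : CkStr A k) : Set A := {x : A | T.t x = x ∧ nabla x = x}

/-- consistency operator ∘x = ⋀_{i=0}^{k} t^i((∼x ∨ x) ∧ (x ∧ ∼x)*) -/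
def cCirc {k : ℕ} (T : CkStr A k) (x : A) : A :=
  (Finset.Icc 0 k).inf fun i => T.t^[i] ((dm x ⊔ x) ⊓ ps (x ⊓ dm x))

/-- x → y = ∼((∼(x∨y))* ∧ (x∨y)) ∨ ((∼(x∧y))* ∧ (x∧y)) -/
def mpTo (x y : A) : A :=
  dm (ps (dm (x ⊔ y)) ⊓ (x ⊔ y)) ⊔ (ps (dm (x ⊓ y)) ⊓ (x ⊓ y))

/-- x ⇒ y = (x → y) ∧ (∼y → ∼x) -/
def mpIff (x y : A) : A := mpTo x y ⊓ mpTo (dm y) (dm x)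

theorem aux_dm_inf (x y : A) : dm (x ⊓ y) = dm x ⊔ dm y := by
  have h := dm_sup (dm x) (dm y)
  rw [dm_dm, dm_dm] at h
  rw [← h, dm_dm]

theorem aux_dm_anti {x y : A} (h : x ≤ y) : dm y ≤ dm x := by
  have h2 := dm_sup x y
  rw [sup_eq_right.mpr h] at h2
  rw [h2]
  exact inf_le_left

theorem aux_dm_bot : dm (⊥ : A) = ⊤ := by
  apply top_le_iff.mp
  have h := aux_dm_anti (bot_le : (⊥ : A) ≤ dm ⊤)
  rwa [dm_dm] at h

theorem aux_dm_top : dm (⊤ : A) = ⊥ := by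
  rw [← aux_dm_bot, dm_dm]

theorem aux_inf_ps (x : A) : x ⊓ ps x = ⊥ := (pseudo x (ps x)).mpr le_rfl

theorem aux_nabla_eq (x : A) : nabla x = x ⊔ dm (ps x) := by
  unfold nabla
  rw [aux_dm_inf, dm_dm]

/-- complemented by its De Morgan negation -/
def AuxB (x : A) : Prop := x ⊓ dm x = ⊥

theorem AuxB.sup_dm {x : A} (h : AuxB x) : x ⊔ dm x = ⊤ := by
  have h2 := congrArg dm h
  rw [aux_dm_inf, dm_dm, aux_dm_bot] at h2
  rwa [sup_comm]

theorem AuxB.dm {x : A} (h : AuxB x) : AuxB (dm x) := by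
  unfold AuxB at *
  rw [dm_dm, inf_comm, h]

theorem AuxB.sup {x y : A} (hx : AuxB x) (hy : AuxB y) : AuxB (x ⊔ y) := by
  unfold AuxB at *
  rw [dm_sup, inf_sup_right, ← inf_assoc, hx, inf_left_comm, hy]
  simp

theorem auxB_bot : AuxB (⊥ : A) := by
  unfold AuxB
  simp

theorem auxB_nabla (x : A) : AuxB (nabla x) := by
  unfold AuxB
  have h1 : dm x ⊓ dm (ps x) ≤ x := by
    have h := aux_dm_anti (modal x)
    rw [dm_sup, dm_sup, dm_dm] at h
    exact h.trans inf_le_right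
  have h2 : dm (nabla x) = dm x ⊓ ps x := by
    unfold nabla
    rw [dm_dm]
  rw [h2, aux_nabla_eq, inf_sup_right, ← le_bot_iff]
  apply sup_le
  · rw [← aux_inf_ps x]
    exact inf_le_inf_left _ inf_le_right
  · rw [← aux_inf_ps x]
    refine le_inf (le_trans ?_ h1) (inf_le_right.trans inf_le_right)
    exact le_inf (inf_le_right.trans inf_le_left) inf_le_left

theorem aux_ps_inf {e : A} (he : AuxB e) (x : A) : ps (e ⊓ x) = dm e ⊔ ps x := by
  apply le_antisymm
  · have h1 : e ⊓ ps (e ⊓ x) ≤ ps x := by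
      rw [← pseudo, ← inf_assoc, inf_comm x e, aux_inf_ps]
    calc ps (e ⊓ x) = (e ⊔ dm e) ⊓ ps (e ⊓ x) := by rw [he.sup_dm, top_inf_eq]
      _ = e ⊓ ps (e ⊓ x) ⊔ dm e ⊓ ps (e ⊓ x) := inf_sup_right _ _ _
      _ ≤ dm e ⊔ ps x := sup_le (h1.trans le_sup_right) (inf_le_left.trans le_sup_left)
  · rw [← pseudo, inf_sup_left, ← le_bot_iff]
    apply sup_le
    · rw [← (he : e ⊓ dm e = ⊥)]
      exact inf_le_inf_right _ inf_le_left
    · rw [← aux_inf_ps x]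
      exact inf_le_inf_right _ inf_le_right

theorem aux_nabla_inf {e : A} (he : AuxB e) (x : A) : nabla (e ⊓ x) = e ⊓ nabla x := by
  rw [aux_nabla_eq, aux_nabla_eq, aux_ps_inf he, dm_sup, dm_dm, inf_sup_left]

/-- the supremum in the implication -/
def auxS {k : ℕ} (T : CkStr A k) (a : A) : A :=
  (Finset.Icc 1 k).sup fun i => nabla (dm (T.t^[i] a))

theorem auxB_S {k : ℕ} (T : CkStr A k) (a : A) : AuxB (auxS T a) := by
  unfold auxS
  exact Finset.sup_induction auxB_bot (fun _ hx _ hy => hx.sup hy) (fun _ _ => auxB_nabla _)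

theorem aux_t_S {k : ℕ} (T : CkStr A k) (a : A) : T.t (auxS T a) = auxS T a := by
  have h1 : T.t (auxS T a) = (Finset.Icc 1 k).sup fun i => nabla (dm (T.t^[i+1] a)) := by
    unfold auxS
    rw [Finset.apply_sup_eq_sup_comp T.t T.map_sup T.map_bot]
    congr 1
    funext i
    simp only [Function.comp, nabla, T.map_dm, T.map_inf, T.map_ps,
      Function.iterate_succ_apply']
  have hp : T.t^[k+1] a = T.t^[1] a := by
    rw [Function.iterate_succ_apply', T.periodic, Function.iterate_one]
  rw [h1]
  unfold auxS
  apply le_antisymm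
  · apply Finset.sup_le
    intro i hi
    rw [Finset.mem_Icc] at hi
    by_cases h : i = k
    · subst h
      rw [hp]
      exact Finset.le_sup (f := fun i => nabla (dm (T.t^[i] a)))
        (Finset.mem_Icc.mpr ⟨le_rfl, hi.1⟩)
    · exact Finset.le_sup (f := fun i => nabla (dm (T.t^[i] a)))
        (Finset.mem_Icc.mpr ⟨by omega, by omega⟩)
  · apply Finset.sup_le
    intro i hi
    rw [Finset.mem_Icc] at hi
    by_cases h : i = 1
    · subst h
      rw [← hp]
      exact Finset.le_sup (f := fun i => nabla (dm (T.t^[i+1] a)))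
        (Finset.mem_Icc.mpr ⟨hi.2, le_rfl⟩)
    · obtain ⟨j, rfl⟩ : ∃ j, i = j + 1 := ⟨i - 1, by omega⟩
      exact Finset.le_sup (f := fun i => nabla (dm (T.t^[i+1] a)))
        (Finset.mem_Icc.mpr ⟨by omega, by omega⟩)

theorem aux_iter_sup {k : ℕ} (T : CkStr A k) (a b : A) (i : ℕ) :
    T.t^[i] (auxS T a ⊔ b) = auxS T a ⊔ T.t^[i] b := by
  induction i with
  | zero => rfl
  | succ n ih => rw [Function.iterate_succ_apply', ih, T.map_sup, aux_t_S,
      Function.iterate_succ_apply']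

theorem aux_S_sup {k : ℕ} (T : CkStr A k) (a b : A) :
    auxS T (auxS T a ⊔ b) = dm (auxS T a) ⊓ auxS T b := by
  rw [auxS, auxS.eq_1 T b, Finset.sup_inf_distrib_left]
  congr 1
  funext i
  rw [aux_iter_sup, dm_sup, aux_nabla_inf (auxB_S T a).dm]

theorem stmt7 {k : ℕ} (hk : 0 < k) (T : CkStr A k) (a b c : A) :
    rimp T a (rimp T b c) = rimp T (rimp T a b) (rimp T a c) := by
  change auxS T a ⊔ (auxS T b ⊔ c) = auxS T (auxS T a ⊔ b) ⊔ (auxS T a ⊔ c)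
  rw [aux_S_sup, ← sup_assoc, ← sup_assoc, sup_inf_right, sup_comm (dm _),
    (auxB_S T a).sup_dm, top_inf_eq, sup_comm (auxS T b)]
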